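/- Let V be a finite set, let k ≤ |V|, let (Ω_v)_{v ∈ V} be finite nonempty types, and let P be a probability mass function on Π_{v ∈ V} Ω_v that factorizes according to a junction tree on V all of whose clusters have at most k elements (a k-width junction tree). Then there exists a k-order cherry tree on V according to which P factorizes. -/

import Mathlib

/-- A junction tree on a vertex set `V`: a finite tree `G` with nodes labeled by
clusters (finite subsets of `V`), such that no cluster is contained in the cluster
of another node and the running intersection property holds.  (The covering
condition "the clusters cover `V`" is stated separately as `JTree.CoversAll`,
so that junction trees on subsets of `V`, such as the tree formed by the
separators, can be treated uniformly.) -/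
structure JTree (V : Type) [DecidableEq V] where
  ι : Type
  [fin : Fintype ι]
  [deq : DecidableEq ι]
  G : SimpleGraph ι
  isTree : G.IsTree
  C : ι → Finset V
  noSub : ∀ i j : ι, i ≠ j → ¬ C i ⊆ C j
  rip : ∀ (i j : ι) (p : G.Walk i j), p.IsPath → ∀ x ∈ p.support, C i ∩ C j ⊆ C x

attribute [instance] JTree.fin JTree.deq

namespace JTree

variable {V : Type} [DecidableEq V]

/-- The clusters cover all of `V`: the junction tree is a junction tree "on `V`". -/
def CoversAll (T : JTree V) : Prop := ∀ v : V, ∃ i, v ∈ T.C i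

/-- `T` is a `k`-order cherry tree: every cluster has exactly `k` elements and
every edge-separator has exactly `k - 1` elements. -/
def IsCherry (T : JTree V) (k : ℕ) : Prop :=
  (∀ i, (T.C i).card = k) ∧ ∀ i j, T.G.Adj i j → (T.C i ∩ T.C j).card = k - 1

/-- The set of (distinct) separators of `T`. -/
def separators (T : JTree V) : Set (Finset V) :=
  { s | ∃ i j, T.G.Adj i j ∧ s = T.C i ∩ T.C j }

/-- The separators of `T` form a `(k-1)`-order cherry tree: there is a junction
tree whose set of clusters is exactly the set of distinct separators of `T`, in
which every cluster has `k - 1` elements and every edge-separator has `k - 2`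
elements. -/
def SeparatorsFormCherry (T : JTree V) (k : ℕ) : Prop :=
  ∃ T' : JTree V, T'.IsCherry (k - 1) ∧ Set.range T'.C = T.separators

/-- Every cluster of `T'` is the union of two clusters that are adjacent in `T`. -/
def Succ (T T' : JTree V) : Prop :=
  ∀ i' : T'.ι, ∃ i j : T.ι, T.G.Adj i j ∧ T'.C i' = T.C i ∪ T.C j

/-- `T` is a truncated R-vine at level `k`: there exists a cherry-vine sequence
`T₂, …, T_k` on `V` (with `T_m` an `m`-order cherry tree on `V` and each cluster of
`T_{m+1}` the union of two adjacent clusters of `T_m`) whose top tree `T_k` is `T`. -/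
def IsTruncatedRVine (T : JTree V) (k : ℕ) : Prop :=
  ∃ Ts : ℕ → JTree V,
    (∀ m, 2 ≤ m → m ≤ k → (Ts m).CoversAll ∧ (Ts m).IsCherry m) ∧
    (∀ m, 2 ≤ m → m < k → Succ (Ts m) (Ts (m + 1))) ∧
    Ts k = T

/-- The separator attached to an edge of the tree, as a function on `Sym2`. -/
noncomputable def sep (T : JTree V) : Sym2 T.ι → Finset V :=
  Sym2.lift ⟨fun i j => T.C i ∩ T.C j, fun _ _ => Finset.inter_comm _ _⟩

/-- The (finite) set of edges of the tree underlying `T`. -/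
noncomputable def edgeFinset (T : JTree V) : Finset (Sym2 T.ι) :=
  Set.Finite.toFinset (Set.toFinite T.G.edgeSet)

end JTree

open scoped BigOperators

/- The marginal of a probability mass function `P` on `Π v, Ω v` with respect to
a set `A` of coordinates: `P_A(x) = P { y | y v = x v for all v ∈ A }`. -/
open Classical in
noncomputable def marg {V : Type} [Fintype V] {Ω : V → Type} [∀ v, Fintype (Ω v)]
    (P : (∀ v, Ω v) → ℝ) (A : Finset V) (x : ∀ v, Ω v) : ℝ :=
  ∑ y : ∀ v, Ω v, if ∀ v ∈ A, y v = x v then P y else 0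

/-- `P` factorizes according to the junction tree `T`:
`P(x) ⬝ ∏_{edges {i,j}} P_{C i ∩ C j}(x) = ∏_{nodes i} P_{C i}(x)` for every `x`. -/
noncomputable def Factorizes {V : Type} [Fintype V] [DecidableEq V]
    {Ω : V → Type} [∀ v, Fintype (Ω v)]
    (T : JTree V) (P : (∀ v, Ω v) → ℝ) : Prop :=
  ∀ x : ∀ v, Ω v,
    P x * ∏ e ∈ T.edgeFinset, marg P (T.sep e) x = ∏ i : T.ι, marg P (T.C i) x

section Marginals

variable {V : Type} [Fintype V] {Ω : V → Type} [∀ v, Fintype (Ω v)] {P : (∀ v, Ω v) → ℝ}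

theorem marg_congr {A : Finset V} {x y : ∀ v, Ω v} (h : ∀ v ∈ A, x v = y v) :
    marg P A x = marg P A y := by
  classical
  unfold marg
  refine Finset.sum_congr rfl fun z _ => ?_
  have : (∀ v ∈ A, z v = x v) ↔ ∀ v ∈ A, z v = y v :=
    forall₂_congr fun v hv => by rw [h v hv]
  simp only [this]

theorem dependsOn_marg {A : Finset V} {s : Set V} (h : (A : Set V) ⊆ s) :
    DependsOn (marg P A) s :=
  fun _ _ hxy => marg_congr fun v hv => hxy v (h hv)

theorem marg_nonneg (hP : ∀ y, 0 ≤ P y) (A : Finset V) (x : ∀ v, Ω v) : 0 ≤ marg P A x := by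
  classical
  exact Finset.sum_nonneg fun y _ => by split_ifs <;> simp [hP]

theorem marg_le_marg_of_subset (hP : ∀ y, 0 ≤ P y) {A B : Finset V} (h : A ⊆ B)
    (x : ∀ v, Ω v) : marg P B x ≤ marg P A x := by
  classical
  refine Finset.sum_le_sum fun y _ => ?_
  by_cases hB : ∀ v ∈ B, y v = x v
  · rw [if_pos hB, if_pos fun v hv => hB v (h hv)]
  · rw [if_neg hB]
    split_ifs <;> simp [hP]

theorem marg_eq_zero_of_subset (hP : ∀ y, 0 ≤ P y) {A B : Finset V} (h : A ⊆ B)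
    {x : ∀ v, Ω v} (hA : marg P A x = 0) : marg P B x = 0 :=
  le_antisymm (hA ▸ marg_le_marg_of_subset hP h x) (marg_nonneg hP B x)

theorem marg_univ (x : ∀ v, Ω v) : marg P Finset.univ x = P x := by
  classical
  simp [marg, ← funext_iff]

variable [DecidableEq V]

theorem sum_marg_update {A : Finset V} {v : V} (hv : v ∈ A) (x : ∀ v, Ω v) :
    ∑ w, marg P A (Function.update x v w) = marg P (A.erase v) x := by
  classical
  unfold marg
  rw [Finset.sum_comm]
  refine Finset.sum_congr rfl fun y _ => ?_
  have key : ∀ w, (∀ u ∈ A, y u = Function.update x v w u) ↔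
      (w = y v ∧ ∀ u ∈ A.erase v, y u = x u) := by
    intro w
    constructor
    · intro h
      refine ⟨by simpa using (h v hv).symm, fun u hu => ?_⟩
      have hne := Finset.ne_of_mem_erase hu
      simpa [hne] using h u (Finset.mem_of_mem_erase hu)
    · rintro ⟨rfl, h⟩ u hu
      by_cases huv : u = v
      · subst huv; simp
      · simpa [huv] using h u (Finset.mem_erase.2 ⟨huv, hu⟩)
  simp only [key, ite_and]
  simp

/-- Summing out a set of coordinates on which the cofactors do not depend. -/
theorem marg_sdiff_mul_eq {A B R : Finset V} {f g : (∀ v, Ω v) → ℝ}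
    (hA : R ⊆ A) (hB : R ⊆ B) (hf : DependsOn f (R : Set V)ᶜ) (hg : DependsOn g (R : Set V)ᶜ)
    (h : ∀ x, marg P A x * f x = marg P B x * g x) (x : ∀ v, Ω v) :
    marg P (A \ R) x * f x = marg P (B \ R) x * g x := by
  induction R using Finset.induction_on generalizing x with
  | empty => simpa using h x
  | insert v R hvR ih =>
    have hsub : ((insert v R : Finset V) : Set V)ᶜ ⊆ (R : Set V)ᶜ :=
      Set.compl_subset_compl.2 (by simp)
    have hrec := ih ((Finset.subset_insert _ _).trans hA) ((Finset.subset_insert _ _).trans hB)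
      (fun _ _ hxy => hf fun u hu => hxy u (hsub hu))
      (fun _ _ hxy => hg fun u hu => hxy u (hsub hu))
    have hupd : ∀ w, ∀ u ∈ ((insert v R : Finset V) : Set V)ᶜ,
        Function.update x v w u = x u := by
      intro w u hu
      have : u ≠ v := by rintro rfl; simp at hu
      simp [this]
    have hsum : ∀ D : Finset V, insert v R ⊆ D →
        marg P (D \ insert v R) x = ∑ w, marg P (D \ R) (Function.update x v w) := by
      intro D hD
      rw [sum_marg_update (by simp [hvR, hD (Finset.mem_insert_self v R)]),
        Finset.sdiff_insert]
    rw [hsum A hA, hsum B hB, Finset.sum_mul, Finset.sum_mul]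
    refine Finset.sum_congr rfl fun w _ => ?_
    rw [← hf (hupd w), ← hg (hupd w)]
    exact hrec _

/-- The coordinates in `A` and those in `B` are conditionally independent
given the coordinates in `A ∩ B`. -/
def CondIndepMarg (P : (∀ v, Ω v) → ℝ) (A B : Finset V) : Prop :=
  ∀ x, marg P (A ∪ B) x * marg P (A ∩ B) x = marg P A x * marg P B x

namespace CondIndepMarg

variable {A B C : Finset V}

theorem symm (h : CondIndepMarg P A B) : CondIndepMarg P B A := fun x => by
  rw [Finset.union_comm, Finset.inter_comm, h x, mul_comm]

theorem of_subset (h : A ⊆ B) : CondIndepMarg P A B := fun x => by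
  rw [Finset.union_eq_right.2 h, Finset.inter_eq_left.2 h, mul_comm]

theorem decomposition (h : CondIndepMarg P A B) (hC : A ∩ B ⊆ C) (hCB : C ⊆ B) :
    CondIndepMarg P A C := by
  intro x
  have hd : ∀ v ∈ A, v ∉ B \ C := fun v hA hv => by
    simp only [Finset.mem_sdiff] at hv
    exact hv.2 (hC (Finset.mem_inter.2 ⟨hA, hv.1⟩))
  have := marg_sdiff_mul_eq (P := P) (A := A ∪ B) (B := B) (R := B \ C)
    (f := marg P (A ∩ B)) (g := marg P A)
    (Finset.sdiff_subset.trans Finset.subset_union_right) Finset.sdiff_subset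
    (dependsOn_marg fun v hv => by
      simpa using hd v (Finset.mem_inter.1 hv).1)
    (dependsOn_marg fun v hv => by simpa using hd v hv)
    (fun y => by rw [h y, mul_comm]) x
  have e1 : (A ∪ B) \ (B \ C) = A ∪ C := by
    ext v
    have := @hC v
    have := @hCB v
    simp only [Finset.mem_sdiff, Finset.mem_union, Finset.mem_inter] at *
    tauto
  have e2 : A ∩ C = A ∩ B := by
    ext v
    have := @hC v
    have := @hCB v
    simp only [Finset.mem_inter] at *
    tauto
  rw [e1, Finset.sdiff_sdiff_eq_self hCB] at this
  rw [e2, this, mul_comm]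

theorem weak_union (hP : ∀ y, 0 ≤ P y) (h : CondIndepMarg P A B) (hCB : C ⊆ B) :
    CondIndepMarg P (A ∪ C) B := by
  intro x
  have e1 : A ∪ C ∪ B = A ∪ B := by
    rw [Finset.union_assoc, Finset.union_eq_right.2 hCB]
  have e2 : (A ∪ C) ∩ B = A ∩ B ∪ C := by
    rw [Finset.union_inter_distrib_right, Finset.inter_eq_left.2 hCB]
  have e3 : A ∪ (A ∩ B ∪ C) = A ∪ C := by
    rw [← Finset.union_assoc, Finset.union_eq_left.2 Finset.inter_subset_left]
  have e4 : A ∩ (A ∩ B ∪ C) = A ∩ B := by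
    ext v
    have := @hCB v
    simp only [Finset.mem_inter, Finset.mem_union]
    tauto
  have h1 := h x
  have h2 := h.decomposition (C := A ∩ B ∪ C) Finset.subset_union_left
    (Finset.union_subset Finset.inter_subset_right hCB) x
  rw [e3, e4] at h2
  rw [e1, e2]
  by_cases h0 : marg P (A ∩ B) x = 0
  · rw [marg_eq_zero_of_subset hP
        (Finset.inter_subset_left.trans Finset.subset_union_left) h0,
      marg_eq_zero_of_subset hP Finset.inter_subset_right h0]
    simp
  · apply mul_right_cancel₀ h0
    linear_combination marg P (A ∩ B ∪ C) x * h1 - marg P B x * h2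

end CondIndepMarg

end Marginals

namespace JTree

variable {V : Type} [DecidableEq V]

/-- In a forest, the running intersection property follows from the existence, for every `v`,
of walks along nodes whose clusters contain `v`. -/
theorem rip_of_exists_walk {ι : Type} {G : SimpleGraph ι} (hG : G.IsAcyclic)
    {C : ι → Finset V}
    (h : ∀ v i j, v ∈ C i → v ∈ C j → ∃ w : G.Walk i j, ∀ x ∈ w.support, v ∈ C x)
    (i j : ι) (p : G.Walk i j) (hp : p.IsPath) (x : ι) (hx : x ∈ p.support) :
    C i ∩ C j ⊆ C x := by
  classical
  intro v hv
  obtain ⟨w, hw⟩ := h v i j (Finset.mem_inter.1 hv).1 (Finset.mem_inter.1 hv).2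
  have hpw : p = w.toPath :=
    congrArg Subtype.val ((hG.subsingleton_path i j).elim ⟨p, hp⟩ w.toPath)
  exact hw x (w.support_toPath_subset_support (hpw ▸ hx))

theorem exists_walk_mem (T : JTree V) {v : V} {i j : T.ι} (hi : v ∈ T.C i) (hj : v ∈ T.C j) :
    ∃ w : T.G.Walk i j, ∀ x ∈ w.support, v ∈ T.C x := by
  obtain ⟨p, hp, -⟩ := T.isTree.existsUnique_path i j
  exact ⟨p, fun x hx => T.rip i j p hp x hx (Finset.mem_inter.2 ⟨hi, hj⟩)⟩

/-- The union of all clusters. -/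
def vertices (T : JTree V) : Finset V := Finset.univ.biUnion T.C

theorem subset_vertices (T : JTree V) (i : T.ι) : T.C i ⊆ T.vertices :=
  Finset.subset_biUnion_of_mem T.C (Finset.mem_univ i)

@[simp] theorem mem_vertices {T : JTree V} {v : V} : v ∈ T.vertices ↔ ∃ i, v ∈ T.C i := by
  simp [vertices]

@[simp] theorem mem_edgeFinset {T : JTree V} {e : Sym2 T.ι} :
    e ∈ T.edgeFinset ↔ e ∈ T.G.edgeSet := by
  simp [edgeFinset]

@[simp] theorem sep_mk (T : JTree V) (i j : T.ι) : T.sep s(i, j) = T.C i ∩ T.C j := rfl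

/-- The product over the separators of a tree which extends another tree by a leaf `a`. -/
theorem prod_sep_eq_mul {T T' : JTree V} (f : T.ι → T'.ι) (hf : Function.Injective f)
    (hC : ∀ i, T'.C (f i) = T.C i) {a b : T'.ι} (ha : a ∉ Set.range f)
    (hE : T'.G.edgeSet = insert s(a, b) (Sym2.map f '' T.G.edgeSet)) (g : Finset V → ℝ) :
    ∏ e ∈ T'.edgeFinset, g (T'.sep e) =
      g (T'.C a ∩ T'.C b) * ∏ e ∈ T.edgeFinset, g (T.sep e) := by
  classical
  have hE' : T'.edgeFinset = insert s(a, b) (T.edgeFinset.image (Sym2.map f)) := by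
    ext e
    rw [mem_edgeFinset, hE]
    simp
  have hnot : s(a, b) ∉ T.edgeFinset.image (Sym2.map f) := by
    intro hmem
    obtain ⟨e, -, he⟩ := Finset.mem_image.1 hmem
    have hae : a ∈ Sym2.map f e := he ▸ Sym2.mem_mk_left _ _
    obtain ⟨i, -, hi⟩ := Sym2.mem_map.1 hae
    exact ha ⟨i, hi⟩
  rw [hE', Finset.prod_insert hnot, sep_mk, Finset.prod_image (Sym2.map.injective hf).injOn]
  refine congrArg₂ (· * ·) rfl (Finset.prod_congr rfl fun e _ => ?_)
  induction e with | _ i j =>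
  rw [Sym2.map_mk, sep_mk, sep_mk, hC, hC]

/-- The marginal of `P` on the vertices of `T` factorizes according to `T`. -/
def MargFactorizes [Fintype V] {Ω : V → Type} [∀ v, Fintype (Ω v)]
    (T : JTree V) (P : (∀ v, Ω v) → ℝ) : Prop :=
  ∀ x : ∀ v, Ω v, marg P T.vertices x * ∏ e ∈ T.edgeFinset, marg P (T.sep e) x =
    ∏ i : T.ι, marg P (T.C i) x

/-- The junction tree with a single cluster. -/
def single (B : Finset V) : JTree V where
  ι := Unit
  G := ⊥
  isTree := .of_subsingleton
  C _ := B
  noSub i j h := (h (Subsingleton.elim i j)).elim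
  rip _ _ _ _ _ _ := Finset.inter_subset_left

@[simp] theorem vertices_single (B : Finset V) : (single B).vertices = B := by
  ext v
  rw [mem_vertices]
  exact ⟨fun ⟨_, h⟩ => h, fun h => ⟨(), h⟩⟩

theorem isCherry_single (B : Finset V) : (single B).IsCherry B.card :=
  ⟨fun _ => rfl, fun _ _ h => h.elim⟩

theorem margFactorizes_single [Fintype V] {Ω : V → Type} [∀ v, Fintype (Ω v)]
    (B : Finset V) (P : (∀ v, Ω v) → ℝ) : (single B).MargFactorizes P := by
  intro x
  have he : (single B).edgeFinset = ∅ :=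
    Finset.eq_empty_of_forall_notMem fun e he => by
      induction e with | _ a b => exact (mem_edgeFinset.1 he : (⊥ : SimpleGraph Unit).Adj a b)
  have hp : ∏ i : (single B).ι, marg P ((single B).C i) x = marg P B x :=
    Fintype.prod_unique (ι := Unit) _
  rw [he, vertices_single, hp, Finset.prod_empty, mul_one]

section AddLeaf

variable {ι : Type}

/-- The graph obtained by attaching a new leaf `none` to the node `p`. -/
def leafGraph (G : SimpleGraph ι) (p : ι) : SimpleGraph (Option ι) :=
  G.map Function.Embedding.some ⊔ SimpleGraph.edge none (some p)

theorem leafGraph_adj_none {G : SimpleGraph ι} {p : ι} : (leafGraph G p).Adj none (some p) := by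
  simp [leafGraph, SimpleGraph.edge_adj]

/-- The inclusion of a graph into the graph with an additional leaf. -/
def leafGraphHom (G : SimpleGraph ι) (p : ι) : G →g leafGraph G p where
  toFun := some
  map_rel' {a b} h := Or.inl ((SimpleGraph.map_adj _ _ _ _).2 ⟨a, b, h, rfl, rfl⟩)

theorem edgeSet_leafGraph (G : SimpleGraph ι) (p : ι) :
    (leafGraph G p).edgeSet = insert s(none, some p) (Sym2.map some '' G.edgeSet) := by
  rw [leafGraph, SimpleGraph.edgeSet_sup, SimpleGraph.edgeSet_map,
    SimpleGraph.edgeSet_edge_of_ne (by simp), Set.union_comm, Set.insert_eq]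
  rfl

theorem notMem_image_map_some (p : ι) (s : Set (Sym2 ι)) :
    s(none, some p) ∉ Sym2.map some '' s := by
  rintro ⟨e, -, he⟩
  have : (none : Option ι) ∈ Sym2.map some e := he ▸ Sym2.mem_mk_left _ _
  simp at this

theorem isTree_leafGraph [Finite ι] {G : SimpleGraph ι} (hG : G.IsTree) (p : ι) :
    (leafGraph G p).IsTree := by
  obtain ⟨hc, hcard⟩ := SimpleGraph.isTree_iff_connected_and_card.1 hG
  refine SimpleGraph.isTree_iff_connected_and_card.2 ⟨?_, ?_⟩
  · refine SimpleGraph.connected_iff_exists_forall_reachable _ |>.2 ⟨some p, ?_⟩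
    rintro (_ | j)
    · exact leafGraph_adj_none.symm.reachable
    · exact (hc.preconnected p j).map (leafGraphHom G p)
  · rw [edgeSet_leafGraph, Nat.card_coe_set_eq,
      Set.ncard_insert_of_notMem (notMem_image_map_some p _) (Set.toFinite _),
      Set.ncard_image_of_injective _ (Sym2.map.injective (Option.some_injective ι)),
      ← Nat.card_coe_set_eq, hcard, Finite.card_option]

/-- Attach a new leaf with cluster `B` to the node `p`. -/
def addLeaf (T : JTree V) (p : T.ι) (B : Finset V) (h₁ : ∀ j, ¬ T.C j ⊆ B)
    (h₂ : ∀ j, ¬ B ⊆ T.C j) (h : T.vertices ∩ B ⊆ T.C p) : JTree V where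
  ι := Option T.ι
  G := leafGraph T.G p
  isTree := isTree_leafGraph T.isTree p
  C i := i.elim B T.C
  noSub := by
    rintro (_ | i) (_ | j) hij
    · exact (hij rfl).elim
    · exact h₂ j
    · exact h₁ i
    · exact T.noSub i j fun e => hij (congrArg some e)
  rip := by
    have key : ∀ v i j, v ∈ T.C i → v ∈ T.C j → ∃ w : (leafGraph T.G p).Walk (some i) (some j),
        ∀ x ∈ w.support, v ∈ x.elim B T.C := by
      intro v i j hi hj
      obtain ⟨w, hw⟩ := T.exists_walk_mem hi hj
      refine ⟨w.map (leafGraphHom T.G p), fun x hx => ?_⟩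
      obtain ⟨y, hy, rfl⟩ := List.mem_map.1 (w.support_map (leafGraphHom T.G p) ▸ hx)
      exact hw y hy
    have key' : ∀ v j, v ∈ B → v ∈ T.C j → ∃ w : (leafGraph T.G p).Walk none (some j),
        ∀ x ∈ w.support, v ∈ x.elim B T.C := by
      intro v j hB hj
      obtain ⟨w, hw⟩ := key v p j
        (h (Finset.mem_inter.2 ⟨T.subset_vertices j hj, hB⟩)) hj
      refine ⟨.cons leafGraph_adj_none w, fun x hx => ?_⟩
      rw [SimpleGraph.Walk.support_cons, List.mem_cons] at hx
      rcases hx with rfl | hx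
      · exact hB
      · exact hw x hx
    refine rip_of_exists_walk (isTree_leafGraph T.isTree p).isAcyclic ?_
    rintro v (_ | i) (_ | j) hi hj
    · exact ⟨.nil, by simpa using hi⟩
    · exact key' v j hi hj
    · obtain ⟨w, hw⟩ := key' v i hj hi
      exact ⟨w.reverse, by simpa using hw⟩
    · exact key v i j hi hj

variable {T : JTree V} {p : T.ι} {B : Finset V} {h₁ : ∀ j, ¬ T.C j ⊆ B}
    {h₂ : ∀ j, ¬ B ⊆ T.C j} {h : T.vertices ∩ B ⊆ T.C p}

theorem vertices_addLeaf : (T.addLeaf p B h₁ h₂ h).vertices = T.vertices ∪ B := by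
  ext v
  rw [mem_vertices, Finset.mem_union, mem_vertices, or_comm]
  exact Option.exists

theorem isCherry_addLeaf {k : ℕ} (hT : T.IsCherry k) (hB : B.card = k)
    (hS : (T.vertices ∩ B).card = k - 1) : (T.addLeaf p B h₁ h₂ h).IsCherry k := by
  have hS' : (B ∩ T.C p).card = k - 1 := by
    rw [← hS]
    congr 1
    refine subset_antisymm (fun v hv => ?_) (fun v hv => ?_)
    · rw [Finset.mem_inter] at hv ⊢
      exact ⟨T.subset_vertices p hv.2, hv.1⟩
    · exact Finset.mem_inter.2 ⟨(Finset.mem_inter.1 hv).2, h hv⟩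
  constructor
  · rintro (_ | i)
    · exact hB
    · exact hT.1 i
  · intro i j hij
    have hij' : s(i, j) ∈ (leafGraph T.G p).edgeSet := hij
    rw [edgeSet_leafGraph] at hij'
    rcases hij' with he | ⟨e, he, hee⟩
    · rcases Sym2.eq_iff.1 he with ⟨rfl, rfl⟩ | ⟨rfl, rfl⟩
      · exact hS'
      · rw [Finset.inter_comm]
        exact hS'
    · induction e with | _ a b =>
      rw [Sym2.map_mk] at hee
      have hab := hT.2 a b he
      rcases Sym2.eq_iff.1 hee with ⟨rfl, rfl⟩ | ⟨rfl, rfl⟩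
      · exact hab
      · rw [Finset.inter_comm]
        exact hab

theorem margFactorizes_addLeaf [Fintype V] {Ω : V → Type} [∀ v, Fintype (Ω v)]
    {P : (∀ v, Ω v) → ℝ} (hT : T.MargFactorizes P) (hB : CondIndepMarg P T.vertices B) :
    (T.addLeaf p B h₁ h₂ h).MargFactorizes P := by
  classical
  intro x
  have hS : B ∩ T.C p = T.vertices ∩ B := by
    refine subset_antisymm (fun v hv => ?_) (fun v hv => ?_)
    · rw [Finset.mem_inter] at hv ⊢
      exact ⟨T.subset_vertices p hv.2, hv.1⟩
    · exact Finset.mem_inter.2 ⟨(Finset.mem_inter.1 hv).2, h hv⟩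
  have hprod : ∏ e ∈ (T.addLeaf p B h₁ h₂ h).edgeFinset,
      marg P ((T.addLeaf p B h₁ h₂ h).sep e) x =
      marg P (T.vertices ∩ B) x * ∏ e ∈ T.edgeFinset, marg P (T.sep e) x := by
    rw [← hS]
    exact prod_sep_eq_mul (T' := T.addLeaf p B h₁ h₂ h) some (Option.some_injective _)
      (fun _ => rfl) (by rintro ⟨_, ⟨⟩⟩) (edgeSet_leafGraph T.G p) (marg P · x)
  have hnodes : ∏ i, marg P ((T.addLeaf p B h₁ h₂ h).C i) x =
      marg P B x * ∏ i, marg P (T.C i) x := Fintype.prod_option _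
  rw [hprod, hnodes, vertices_addLeaf, ← mul_assoc, hB x, ← hT x]
  ring

end AddLeaf

section EraseLeaf

theorem exists_leaf (T : JTree V) [Nontrivial T.ι] :
    ∃ l p : T.ι, T.G.Adj l p ∧ (∀ j, T.G.Adj l j → j = p) ∧
      (T.G.comap (Subtype.val : {j // j ≠ l} → T.ι)).IsTree := by
  classical
  obtain ⟨l, hl⟩ := T.isTree.exists_vert_degree_one_of_nontrivial
  obtain ⟨p, hp, hu⟩ := SimpleGraph.degree_eq_one_iff_existsUnique_adj.1 hl
  exact ⟨l, p, hp, hu, T.isTree.1.induce_compl_singleton_of_degree_eq_one hl,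
    T.isTree.isAcyclic.of_comap (Function.Embedding.subtype _)⟩

/-- Remove a leaf `l` of a junction tree. -/
def eraseLeaf (T : JTree V) (l : T.ι)
    (h : (T.G.comap (Subtype.val : {j // j ≠ l} → T.ι)).IsTree) : JTree V where
  ι := {j // j ≠ l}
  G := T.G.comap Subtype.val
  isTree := h
  C j := T.C j
  noSub i j hij := T.noSub i j fun e => hij (Subtype.ext e)
  rip i j w hw x hx := by
    let f : T.G.comap (Subtype.val : {j // j ≠ l} → T.ι) →g T.G := ⟨Subtype.val, id⟩
    refine T.rip i j (w.map f) (hw.map Subtype.val_injective) x ?_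
    rw [SimpleGraph.Walk.support_map]
    exact List.mem_map_of_mem (f := f) hx

variable {T : JTree V} {l p : T.ι}
  {h : (T.G.comap (Subtype.val : {j // j ≠ l} → T.ι)).IsTree}

theorem vertices_eraseLeaf_union : (T.eraseLeaf l h).vertices ∪ T.C l = T.vertices := by
  ext v
  rw [Finset.mem_union, mem_vertices, mem_vertices]
  constructor
  · rintro (⟨i, hi⟩ | hv)
    · exact ⟨i.1, hi⟩
    · exact ⟨l, hv⟩
  · rintro ⟨i, hi⟩
    by_cases hil : i = l
    · exact Or.inr (hil ▸ hi)
    · exact Or.inl ⟨⟨i, hil⟩, hi⟩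

theorem vertices_eraseLeaf_inter (hp : T.G.Adj l p) (hu : ∀ j, T.G.Adj l j → j = p) :
    (T.eraseLeaf l h).vertices ∩ T.C l = T.C l ∩ T.C p := by
  ext v
  rw [Finset.mem_inter, Finset.mem_inter, mem_vertices, and_comm]
  refine and_congr_right fun hl => ⟨?_, fun hv => ⟨⟨p, hp.ne'⟩, hv⟩⟩
  rintro ⟨⟨j, hj⟩, hv⟩
  obtain ⟨w, hw⟩ := T.exists_walk_mem hl (show v ∈ T.C j from hv)
  cases w with
  | nil => exact (hj rfl).elim
  | cons hadj w =>
    obtain rfl := hu _ hadj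
    exact hw _ (by simp)

theorem edgeSet_eq_insert_of_leaf {ι : Type} {G : SimpleGraph ι} {l p : ι} (hp : G.Adj l p)
    (hu : ∀ j, G.Adj l j → j = p) :
    G.edgeSet = insert s(l, p)
      (Sym2.map Subtype.val '' (G.comap (Subtype.val : {j // j ≠ l} → ι)).edgeSet) := by
  ext e
  induction e with | _ a b =>
  rw [Set.mem_insert_iff, SimpleGraph.mem_edgeSet]
  constructor
  · intro hab
    by_cases ha : a = l
    · subst ha
      exact Or.inl (by rw [hu b hab])
    by_cases hb : b = l
    · subst hb
      exact Or.inl (by rw [hu a hab.symm, Sym2.eq_swap])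
    exact Or.inr ⟨s(⟨a, ha⟩, ⟨b, hb⟩), hab, rfl⟩
  · rintro (he | ⟨e, he, hee⟩)
    · rw [← SimpleGraph.mem_edgeSet, he]
      exact hp
    · rw [← SimpleGraph.mem_edgeSet, ← hee]
      induction e with | _ c d => exact he

theorem sep_subset_vertices (T : JTree V) (e : Sym2 T.ι) : T.sep e ⊆ T.vertices := by
  induction e with | _ a b =>
  exact Finset.inter_subset_left.trans (T.subset_vertices a)

variable [Fintype V] {Ω : V → Type} [∀ v, Fintype (Ω v)] {P : (∀ v, Ω v) → ℝ}

theorem prod_edgeFinset_eq_mul (hp : T.G.Adj l p) (hu : ∀ j, T.G.Adj l j → j = p)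
    (x : ∀ v, Ω v) :
    ∏ e ∈ T.edgeFinset, marg P (T.sep e) x = marg P (T.C l ∩ T.C p) x *
      ∏ e ∈ (T.eraseLeaf l h).edgeFinset, marg P ((T.eraseLeaf l h).sep e) x :=
  prod_sep_eq_mul (T := T.eraseLeaf l h) Subtype.val Subtype.val_injective (fun _ => rfl)
    (by rintro ⟨a, ha⟩; exact a.2 ha) (edgeSet_eq_insert_of_leaf hp hu) (marg P · x)

theorem MargFactorizes.eraseLeaf (hP : ∀ y, 0 ≤ P y) (hT : T.MargFactorizes P)
    (hp : T.G.Adj l p) (hu : ∀ j, T.G.Adj l j → j = p) :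
    (T.eraseLeaf l h).MargFactorizes P := by
  intro x
  set T' := T.eraseLeaf l h with hT'
  have hI : T'.vertices ∩ T.C l = T.C l ∩ T.C p := vertices_eraseLeaf_inter hp hu
  have hU : T'.vertices ∪ T.C l = T.vertices := vertices_eraseLeaf_union
  set S := T.C l ∩ T.C p with hS
  have hnodes : ∀ y, ∏ i, marg P (T.C i) y = marg P (T.C l) y * ∏ i, marg P (T'.C i) y :=
    fun y => Fintype.prod_eq_mul_prod_subtype_ne _ l
  have hfac : ∀ y, marg P T.vertices y *
      (marg P S y * ∏ e ∈ T'.edgeFinset, marg P (T'.sep e) y) =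
      marg P (T.C l) y * ∏ i, marg P (T'.C i) y := fun y => by
    rw [← hnodes, ← hT y, prod_edgeFinset_eq_mul (h := h) hp hu]
  have hdisj : (T'.vertices : Set V) ⊆ ((T.C l \ S : Finset V) : Set V)ᶜ := by
    intro v hv hv'
    rw [Finset.mem_coe, Finset.mem_sdiff, ← hI] at hv'
    exact hv'.2 (Finset.mem_inter.2 ⟨hv, hv'.1⟩)
  have hSV : S ⊆ T'.vertices := hI ▸ Finset.inter_subset_left
  have hdep : ∀ {A : Finset V}, A ⊆ T'.vertices → ∀ {y z : ∀ v, Ω v},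
      (∀ v ∈ ((T.C l \ S : Finset V) : Set V)ᶜ, y v = z v) → marg P A y = marg P A z :=
    fun hA _ _ hyz => marg_congr fun v hv => hyz v (hdisj (hA hv))
  have key := marg_sdiff_mul_eq (P := P) (A := T.vertices) (B := T.C l) (R := T.C l \ S)
    (Finset.sdiff_subset.trans (T.subset_vertices l)) Finset.sdiff_subset
    (fun y z hyz => by
      rw [hdep hSV hyz, Finset.prod_congr rfl fun e _ => hdep (T'.sep_subset_vertices e) hyz])
    (fun y z hyz => Finset.prod_congr rfl fun i _ => hdep (T'.subset_vertices i) hyz) hfac x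
  have e1 : T.vertices \ (T.C l \ S) = T'.vertices := by
    rw [← hU, ← hI]
    ext v
    simp only [Finset.mem_sdiff, Finset.mem_union, Finset.mem_inter]
    tauto
  rw [e1, Finset.sdiff_sdiff_eq_self Finset.inter_subset_left] at key
  by_cases h0 : marg P S x = 0
  · rw [marg_eq_zero_of_subset hP hSV h0, zero_mul, eq_comm]
    exact Finset.prod_eq_zero (Finset.mem_univ (⟨p, hp.ne'⟩ : {j // j ≠ l}))
      (marg_eq_zero_of_subset hP Finset.inter_subset_right h0)
  · apply mul_left_cancel₀ h0
    linear_combination key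

theorem MargFactorizes.condIndepMarg_eraseLeaf (hP : ∀ y, 0 ≤ P y) (hT : T.MargFactorizes P)
    (hp : T.G.Adj l p) (hu : ∀ j, T.G.Adj l j → j = p) :
    CondIndepMarg P (T.eraseLeaf l h).vertices (T.C l) := by
  intro x
  have hT'x := hT.eraseLeaf (h := h) hP hp hu x
  have hTx := hT x
  have hnodes : ∏ i, marg P (T.C i) x =
      marg P (T.C l) x * ∏ i, marg P ((T.eraseLeaf l h).C i) x :=
    Fintype.prod_eq_mul_prod_subtype_ne _ l
  rw [hnodes, prod_edgeFinset_eq_mul (h := h) hp hu, ← hT'x] at hTx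
  rw [vertices_eraseLeaf_union, vertices_eraseLeaf_inter hp hu]
  by_cases h0 : ∏ e ∈ (T.eraseLeaf l h).edgeFinset, marg P ((T.eraseLeaf l h).sep e) x = 0
  · obtain ⟨e, -, he⟩ := Finset.prod_eq_zero_iff.1 h0
    have h1 := marg_eq_zero_of_subset hP (sep_subset_vertices _ e) he
    rw [h1, ← vertices_eraseLeaf_union (h := h),
      marg_eq_zero_of_subset hP Finset.subset_union_left h1]
    simp
  · apply mul_right_cancel₀ h0
    linear_combination hTx

end EraseLeaf

section CherryCompletion

variable [Fintype V] {Ω : V → Type} [∀ v, Fintype (Ω v)] {P : (∀ v, Ω v) → ℝ}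
  {k : ℕ} {A B : Finset V} {𝓕 : Set (Finset V)}

/-- The sets in `𝓕` are subsets of `A` and, as soon as `A` has `k` elements, the marginal of
`P` on `A` factorizes according to a `k`-order cherry tree on `A`, each set in `𝓕` being
contained in one of its clusters. -/
def HasCherryCompletion (P : (∀ v, Ω v) → ℝ) (k : ℕ) (A : Finset V)
    (𝓕 : Set (Finset V)) : Prop :=
  (∀ F ∈ 𝓕, F ⊆ A) ∧ (k ≤ A.card → ∃ T : JTree V, T.vertices = A ∧ T.IsCherry k ∧
    T.MargFactorizes P ∧ ∀ F ∈ 𝓕, ∃ i, F ⊆ T.C i)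

theorem HasCherryCompletion.mono {𝓖 : Set (Finset V)} (h : HasCherryCompletion P k A 𝓕)
    (hsub : 𝓖 ⊆ 𝓕) : HasCherryCompletion P k A 𝓖 := by
  refine ⟨fun F hF => h.1 F (hsub hF), fun hk => ?_⟩
  obtain ⟨T, h1, h2, h3, h4⟩ := h.2 hk
  exact ⟨T, h1, h2, h3, fun F hF => h4 F (hsub hF)⟩

theorem hasCherryCompletion_of_card_eq (hA : A.card = k) (h : ∀ F ∈ 𝓕, F ⊆ A) :
    HasCherryCompletion P k A 𝓕 :=
  ⟨h, fun _ => ⟨single A, vertices_single A, hA ▸ isCherry_single A,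
    margFactorizes_single A P, fun F hF => ⟨(), h F hF⟩⟩⟩

theorem hasCherryCompletion_empty : HasCherryCompletion P k ∅ {∅} := by
  rcases Nat.eq_zero_or_pos k with rfl | hk
  · exact hasCherryCompletion_of_card_eq rfl (by simp)
  · exact ⟨by simp, fun h => by simp at h; omega⟩

theorem HasCherryCompletion.insert_vertex (hP : ∀ y, 0 ≤ P y)
    (h : HasCherryCompletion P k A 𝓕) {F N : Finset V} {v : V} (hF : F ∈ 𝓕) (hN : N ⊆ F)
    (hNk : N.card < k) (hv : v ∉ A) (hci : CondIndepMarg P A (insert v N)) :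
    HasCherryCompletion P k (insert v A) (insert (insert v N) 𝓕) := by
  have hsub : ∀ F ∈ insert (insert v N) 𝓕, F ⊆ insert v A := by
    rintro G (rfl | hG)
    · exact Finset.insert_subset_insert _ (hN.trans (h.1 F hF))
    · exact (h.1 G hG).trans (Finset.subset_insert _ _)
  rcases lt_trichotomy (insert v A).card k with hlt | heq | hgt
  · exact ⟨hsub, fun hk => absurd hk hlt.not_ge⟩
  · exact hasCherryCompletion_of_card_eq heq hsub
  refine ⟨hsub, fun _ => ?_⟩
  rw [Finset.card_insert_of_notMem hv] at hgt
  obtain ⟨T, rfl, hch, hfac, hcl⟩ := h.2 (by omega)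
  obtain ⟨p, hp⟩ := hcl F hF
  obtain ⟨S, hNS, hSp, hS⟩ := Finset.exists_subsuperset_card_eq (n := k - 1) (hN.trans hp)
    (by omega) (by rw [hch.1 p]; omega)
  have hSV : S ⊆ T.vertices := hSp.trans (T.subset_vertices p)
  have hcard : (insert v S).card = k := by
    rw [Finset.card_insert_of_notMem fun hvS => hv (hSV hvS)]
    omega
  have hI : T.vertices ∩ insert v S = S := by
    rw [Finset.inter_insert_of_notMem hv, Finset.inter_eq_right.2 hSV]
  have hnot : ∀ j, ¬ insert v S ⊆ T.C j := fun j hj =>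
    hv (T.subset_vertices j (hj (Finset.mem_insert_self v S)))
  have hnot' : ∀ j, ¬ T.C j ⊆ insert v S := fun j hj =>
    hnot j (Finset.eq_of_subset_of_card_le hj (by rw [hcard, hch.1 j])).ge
  have hci' : CondIndepMarg P T.vertices (insert v S) := by
    have := (hci.symm.weak_union hP hSV).symm
    rwa [Finset.insert_union, Finset.union_eq_right.2 hNS] at this
  refine ⟨T.addLeaf p (insert v S) hnot' hnot (hI.trans_subset hSp), ?_,
    isCherry_addLeaf hch hcard (by rw [hI, hS]), margFactorizes_addLeaf hfac hci', ?_⟩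
  · rw [vertices_addLeaf, Finset.union_insert, Finset.union_eq_left.2 hSV]
  · rintro G (rfl | hG)
    · exact ⟨none, Finset.insert_subset_insert _ hNS⟩
    · obtain ⟨i, hi⟩ := hcl G hG
      exact ⟨some i, hi⟩

theorem HasCherryCompletion.insert_cluster (hP : ∀ y, 0 ≤ P y)
    (h : HasCherryCompletion P k A 𝓕) {F : Finset V} (hF : F ∈ 𝓕) (hAB : A ∩ B ⊆ F)
    (hB : B.card ≤ k) (hci : CondIndepMarg P A B) :
    HasCherryCompletion P k (A ∪ B) (insert B 𝓕) := by
  have key : ∀ R ⊆ B \ A,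
      HasCherryCompletion P k (A ∪ R) (insert (A ∩ B ∪ R) 𝓕) := by
    intro R
    induction R using Finset.induction_on with
    | empty =>
      intro _
      rw [Finset.union_empty, Finset.union_empty]
      refine ⟨?_, fun hk => ?_⟩
      · rintro G (rfl | hG)
        · exact Finset.inter_subset_left
        · exact h.1 G hG
      · obtain ⟨T, h1, h2, h3, h4⟩ := h.2 hk
        refine ⟨T, h1, h2, h3, ?_⟩
        rintro G (rfl | hG)
        · exact (h4 F hF).imp fun i hi => hAB.trans hi
        · exact h4 G hG
    | insert v R hvR ih =>
      intro hR
      have hvB := Finset.mem_sdiff.1 (hR (Finset.mem_insert_self v R))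
      have hR' : R ⊆ B \ A := (Finset.subset_insert _ _).trans hR
      have hRB : R ⊆ B := hR'.trans Finset.sdiff_subset
      have hNB : A ∩ B ∪ R ⊆ B := Finset.union_subset Finset.inter_subset_right hRB
      have hvN : v ∉ A ∩ B ∪ R := by simp [hvB.2, hvR]
      have hci' : CondIndepMarg P (A ∪ R) (insert v (A ∩ B ∪ R)) := by
        refine (hci.weak_union hP hRB).decomposition ?_ (Finset.insert_subset hvB.1 hNB)
        rw [Finset.union_inter_distrib_right, Finset.inter_eq_left.2 hRB]
        exact Finset.subset_insert _ _
      have hcard : (A ∩ B ∪ R).card < k :=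
        (Finset.card_lt_card ⟨hNB, fun hB' => hvN (hB' hvB.1)⟩).trans_le hB
      have := (ih hR').insert_vertex hP (Set.mem_insert _ _) subset_rfl hcard
        (by simp [hvB.2, hvR]) hci'
      rw [Finset.union_insert, Finset.union_insert]
      exact this.mono (Set.insert_subset_insert (Set.subset_insert _ _))
  have := key (B \ A) subset_rfl
  rwa [Finset.union_sdiff_self_eq_union, Finset.inter_comm A B, Finset.union_comm (B ∩ A),
    Finset.sdiff_union_inter] at this

theorem MargFactorizes.hasCherryCompletion (hP : ∀ y, 0 ≤ P y) {T : JTree V}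
    (hT : T.MargFactorizes P) (hk : ∀ i, (T.C i).card ≤ k) :
    HasCherryCompletion P k T.vertices (Set.range T.C) := by
  induction hn : Fintype.card T.ι using Nat.strong_induction_on generalizing T with
  | _ n ih =>
  rcases subsingleton_or_nontrivial T.ι with hsub | hnon
  · obtain ⟨r⟩ := T.isTree.1.nonempty
    have hV : T.vertices = ∅ ∪ T.C r := by
      rw [Finset.empty_union]
      refine subset_antisymm (fun v hv => ?_) (T.subset_vertices r)
      obtain ⟨i, hi⟩ := mem_vertices.1 hv
      exact Subsingleton.elim i r ▸ hi
    have := (hasCherryCompletion_empty (P := P) (k := k)).insert_cluster hP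
      (Set.mem_singleton _) Finset.inter_subset_left (hk r)
      (CondIndepMarg.of_subset (Finset.empty_subset _))
    rw [hV]
    refine this.mono ?_
    rintro _ ⟨i, rfl⟩
    exact Or.inl (congrArg T.C (Subsingleton.elim i r))
  · obtain ⟨l, p, hp, hu, h⟩ := T.exists_leaf
    have hlt : Fintype.card (T.eraseLeaf l h).ι < n := by
      rw [← hn]
      exact Fintype.card_subtype_lt (p := fun j => j ≠ l) (x := l) (by simp)
    have hQ := ih _ hlt (hT.eraseLeaf (h := h) hP hp hu) (fun i => hk i.1) rfl
    have := hQ.insert_cluster hP (F := T.C p) ⟨⟨p, hp.ne'⟩, rfl⟩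
      ((vertices_eraseLeaf_inter hp hu).trans_subset Finset.inter_subset_right) (hk l)
      (hT.condIndepMarg_eraseLeaf hP hp hu)
    rw [vertices_eraseLeaf_union] at this
    refine this.mono ?_
    rintro _ ⟨i, rfl⟩
    by_cases hil : i = l
    · exact Or.inl (hil ▸ rfl)
    · exact Or.inr ⟨⟨i, hil⟩, rfl⟩

theorem coversAll_iff_vertices_eq_univ {T : JTree V} :
    T.CoversAll ↔ T.vertices = Finset.univ := by
  simp [CoversAll, Finset.eq_univ_iff_forall]

theorem margFactorizes_iff_factorizes {T : JTree V} (hT : T.CoversAll) :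
    T.MargFactorizes P ↔ Factorizes T P := by
  simp only [MargFactorizes, Factorizes, coversAll_iff_vertices_eq_univ.1 hT, marg_univ]

end CherryCompletion

end JTree

/-- a probability mass function on a finite product that factorizes
according to a junction tree on `V` all of whose clusters have at most `k`
elements (a `k`-width junction tree, `k ≤ |V|`) also factorizes according to some
`k`-order cherry tree on `V`. -/
theorem k_width_junction_tree_pmf_factorizes_by_cherry_tree
    {V : Type} [Fintype V] [DecidableEq V] (k : ℕ)
    {Ω : V → Type} [∀ v, Fintype (Ω v)] [∀ v, Nonempty (Ω v)]
    (hk : k ≤ Fintype.card V)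
    (P : (∀ v, Ω v) → ℝ) (hP0 : ∀ y, 0 ≤ P y) (hP1 : ∑ y : ∀ v, Ω v, P y = 1)
    (T : JTree V) (hcov : T.CoversAll) (hwidth : ∀ i, (T.C i).card ≤ k)
    (hfac : Factorizes T P) :
    ∃ T' : JTree V, T'.CoversAll ∧ T'.IsCherry k ∧ Factorizes T' P := by
  have hT := (JTree.margFactorizes_iff_factorizes hcov).2 hfac
  obtain ⟨T', hV, hch, hT', -⟩ := (hT.hasCherryCompletion hP0 hwidth).2
    (by rwa [JTree.coversAll_iff_vertices_eq_univ.1 hcov, Finset.card_univ])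
  have hcov' : T'.CoversAll := JTree.coversAll_iff_vertices_eq_univ.2
    (hV.trans (JTree.coversAll_iff_vertices_eq_univ.1 hcov))
  exact ⟨T', hcov', hch, (JTree.margFactorizes_iff_factorizes hcov').1 hT'⟩
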